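/- Let (X_n)_{n∈ℕ} be an increasing sequence (X_n ⊆ X_{n+1}) of closed, nowhere dense subsets of [0,1], and define h : [0,1] → ℝ by h(x) = 2^{−n} if n is the least index with x ∈ X_n, and h(x) = 0 if x ∉ ⋃_{n∈ℕ} X_n. Then h is its own oscillation function: osc_h(x) = h(x) for every x ∈ [0,1]. -/

import Mathlib

open Set Filter Topology
open scoped Classical

/-- The function `h` of the paper: `h(x) = 2^(-n)` if `n` is the least index with
`x ∈ X n`, and `h(x) = 0` if `x` belongs to no `X n`. -/
noncomputable def hFun (X : ℕ → Set ℝ) (x : ℝ) : ℝ :=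
  if hx : ∃ n, x ∈ X n then (2:ℝ) ^ (-(Nat.find hx : ℤ)) else 0

/-- The oscillation of `f` at `x`, relative to the domain `[0,1]`:
the limit as `δ → 0⁺` (equivalently, the infimum over `δ > 0`) of
`sup f([0,1] ∩ [x-δ,x+δ]) - inf f([0,1] ∩ [x-δ,x+δ])`. -/
noncomputable def osc (f : ℝ → ℝ) (x : ℝ) : ℝ :=
  ⨅ δ : {d : ℝ // 0 < d},
    (sSup (f '' (Set.Icc 0 1 ∩ Set.Icc (x - δ.1) (x + δ.1))) -
     sInf (f '' (Set.Icc 0 1 ∩ Set.Icc (x - δ.1) (x + δ.1))))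

/-!
The oscillation at `x` of an upper semicontinuous function which takes its minimum `m` on a dense
set is `f x - m`: near `x` the supremum tends to `f x`, while every infimum is `m`. The function
`hFun X` is upper semicontinuous because, for `x` outside the closed sets `X 0, …, X (n - 1)`, the
bound `hFun X ≤ 2 ^ (-n)` holds near `x`. It vanishes off `⋃ n, X n`, that is, on a dense set by
Baire's theorem.
-/

section Oscillation

/-- The window `[0,1] ∩ [x - δ, x + δ]` over which `osc` takes its suprema and infima. -/
def window (x δ : ℝ) : Set ℝ :=
  Icc 0 1 ∩ Icc (x - δ) (x + δ)

variable {f : ℝ → ℝ} {m x δ : ℝ}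

lemma mem_window_self (hx : x ∈ Icc (0 : ℝ) 1) (hδ : 0 < δ) : x ∈ window x δ :=
  ⟨hx, by linarith, by linarith⟩

lemma hasBasis_nhdsWithin_window (x : ℝ) :
    (𝓝[Icc 0 1] x).HasBasis (fun δ : ℝ ↦ 0 < δ) (window x) := by
  unfold window
  simpa only [Real.closedBall_eq_Icc, inter_comm _ (Icc (0 : ℝ) 1)] using
    nhdsWithin_hasBasis Metric.nhds_basis_closedBall (Icc (0 : ℝ) 1)

lemma osc_eq_sub_of_isGLB (hx : x ∈ Icc (0 : ℝ) 1) (hbdd : BddAbove (f '' Icc 0 1))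
    (husc : UpperSemicontinuousWithinAt f (Icc 0 1) x)
    (hglb : ∀ δ > 0, IsGLB (f '' window x δ) m) :
    osc f x = f x - m := by
  have hmem (δ : {d : ℝ // 0 < d}) : f x ∈ f '' window x δ :=
    mem_image_of_mem f (mem_window_self hx δ.2)
  have hosc : osc f x = ⨅ δ : {d : ℝ // 0 < d}, (sSup (f '' window x δ) - m) :=
    iInf_congr fun δ ↦ congrArg (sSup (f '' window x δ) - ·) ((hglb δ δ.2).csInf_eq ⟨_, hmem δ⟩)
  have : Nonempty {d : ℝ // 0 < d} := ⟨⟨1, one_pos⟩⟩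
  rw [hosc]
  refine ciInf_eq_of_forall_ge_of_forall_gt_exists_lt (fun δ ↦ ?_) fun w hw ↦ ?_
  · exact sub_le_sub_right
      (le_csSup (hbdd.mono (image_mono inter_subset_left)) (hmem δ)) m
  · obtain ⟨c, hxc, hcw⟩ := exists_between (sub_lt_iff_lt_add.mp hw)
    obtain ⟨δ, hδ, hlt⟩ := (hasBasis_nhdsWithin_window x).eventually_iff.mp (husc c hxc)
    have hsup : sSup (f '' window x δ) ≤ c :=
      csSup_le ⟨_, hmem ⟨δ, hδ⟩⟩ (forall_mem_image.mpr fun _ hy ↦ (hlt hy).le)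
    exact ⟨⟨δ, hδ⟩, sub_lt_iff_lt_add.mpr (hsup.trans_lt hcw)⟩

lemma osc_eq_sub_of_upperSemicontinuousOn (husc : UpperSemicontinuousOn f (Icc 0 1))
    (hle : ∀ y ∈ Icc 0 1, m ≤ f y) (hdense : Icc 0 1 ⊆ closure (Icc 0 1 ∩ f ⁻¹' {m}))
    (hx : x ∈ Icc (0 : ℝ) 1) :
    osc f x = f x - m := by
  refine osc_eq_sub_of_isGLB hx (husc.bddAbove_of_isCompact isCompact_Icc) (husc x hx)
    fun δ hδ ↦ IsLeast.isGLB ⟨?_, forall_mem_image.mpr fun y hy ↦ hle y hy.1⟩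
  obtain ⟨y, hy, hy01, hym⟩ :=
    (mem_closure_iff_nhds_basis' Metric.nhds_basis_closedBall).mp (hdense hx) δ hδ
  rw [Real.closedBall_eq_Icc] at hy
  exact ⟨y, ⟨hy01, hy⟩, hym⟩

end Oscillation

section HFun

variable {X : ℕ → Set ℝ} {x c : ℝ} {n : ℕ}

lemma hFun_eq_zero_of_forall_notMem (hx : ∀ n, x ∉ X n) : hFun X x = 0 :=
  dif_neg (not_exists.mpr hx)

lemma hFun_eq_inv_two_pow_find (hx : ∃ n, x ∈ X n) : hFun X x = (2 ^ Nat.find hx)⁻¹ := by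
  rw [hFun, dif_pos hx, zpow_neg, zpow_natCast]

lemma hFun_nonneg (X : ℕ → Set ℝ) (x : ℝ) : 0 ≤ hFun X x := by
  unfold hFun
  split_ifs <;> positivity

lemma hFun_le_inv_two_pow (hx : ∀ k < n, x ∉ X k) : hFun X x ≤ (2 ^ n)⁻¹ := by
  by_cases hmem : ∃ k, x ∈ X k
  · have hn : n ≤ Nat.find hmem := (Nat.le_find_iff hmem n).mpr hx
    rw [hFun_eq_inv_two_pow_find hmem]
    gcongr
    exact one_le_two
  · rw [hFun_eq_zero_of_forall_notMem (not_exists.mp hmem)]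
    positivity

lemma exists_inv_two_pow_lt_of_hFun_lt (hxc : hFun X x < c) :
    ∃ n : ℕ, (∀ k < n, x ∉ X k) ∧ (2 ^ n)⁻¹ < c := by
  by_cases hmem : ∃ k, x ∈ X k
  · exact ⟨Nat.find hmem, fun _ ↦ Nat.find_min hmem, hFun_eq_inv_two_pow_find hmem ▸ hxc⟩
  · obtain ⟨n, hn⟩ := exists_pow_lt_of_lt_one ((hFun_nonneg X x).trans_lt hxc)
      (two_inv_lt_one (α := ℝ))
    exact ⟨n, fun k _ ↦ not_exists.mp hmem k, by rwa [← inv_pow]⟩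

lemma upperSemicontinuous_hFun (hcl : ∀ n, IsClosed (X n)) : UpperSemicontinuous (hFun X) := by
  intro x c hxc
  obtain ⟨n, hx, hn⟩ := exists_inv_two_pow_lt_of_hFun_lt hxc
  have hnear : ∀ᶠ y in 𝓝 x, ∀ k < n, y ∉ X k :=
    (eventually_all_finite (finite_lt_nat n)).mpr fun k hk ↦
      (hcl k).isOpen_compl.eventually_mem (hx k hk)
  exact hnear.mono fun y hy ↦ (hFun_le_inv_two_pow hy).trans_lt hn

end HFun

section Density

lemma interior_inter_Icc_eq_empty {α : Type*} [LinearOrder α] [DenselyOrdered α] [Nontrivial α]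
    [TopologicalSpace α] [OrderTopology α] {s : Set α} {a b : α}
    (hs : ∀ c d, a ≤ c → c < d → d ≤ b → ¬ Ioo c d ⊆ s) :
    interior (s ∩ Icc a b) = ∅ := by
  by_contra! hne
  obtain ⟨c, d, hcd, hsub⟩ := isOpen_interior.exists_Ioo_subset hne
  have hIoo : Ioo c d ⊆ s ∩ Icc a b := hsub.trans interior_subset
  have hIcc : Icc c d ⊆ Icc a b := by
    rw [← closure_Ioo hcd.ne]
    exact closure_minimal (hIoo.trans inter_subset_right) isClosed_Icc
  obtain ⟨hac, hdb⟩ := (Icc_subset_Icc_iff hcd.le).mp hIcc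
  exact hs c d hac hcd hdb (hIoo.trans inter_subset_left)

lemma Icc_subset_closure_inter_iInter_compl {ι : Type*} [Countable ι] {X : ι → Set ℝ} {a b : ℝ}
    (hab : a ≠ b) (hcl : ∀ i, IsClosed (X i)) (hint : ∀ i, interior (X i ∩ Icc a b) = ∅) :
    Icc a b ⊆ closure (Icc a b ∩ ⋂ i, (X i)ᶜ) := by
  have hdense : Dense (⋂ i, (X i ∩ Icc a b)ᶜ) :=
    dense_iInter_of_isOpen (fun i ↦ ((hcl i).inter isClosed_Icc).isOpen_compl)
      fun i ↦ interior_eq_empty_iff_dense_compl.mp (hint i)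
  have hsub : Ioo a b ∩ ⋂ i, (X i ∩ Icc a b)ᶜ ⊆ Icc a b ∩ ⋂ i, (X i)ᶜ :=
    fun y ⟨hy, hyX⟩ ↦ ⟨Ioo_subset_Icc_self hy, mem_iInter.mpr fun i hi ↦
      mem_iInter.mp hyX i ⟨hi, Ioo_subset_Icc_self hy⟩⟩
  calc
    Icc a b = closure (Ioo a b) := (closure_Ioo hab).symm
    _ ⊆ closure (Ioo a b ∩ ⋂ i, (X i ∩ Icc a b)ᶜ) :=
      closure_minimal (hdense.open_subset_closure_inter isOpen_Ioo) isClosed_closure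
    _ ⊆ closure (Icc a b ∩ ⋂ i, (X i)ᶜ) := closure_mono hsub

end Density

theorem hFun_eq_own_oscillation_general (X : ℕ → Set ℝ) (hcl : ∀ n, IsClosed (X n))
    (hnd : ∀ n, ∀ a b : ℝ, 0 ≤ a → a < b → b ≤ 1 → ¬ (Ioo a b ⊆ closure (X n))) :
    ∀ x ∈ Icc (0 : ℝ) 1, osc (hFun X) x = hFun X x := by
  intro x hx
  have hint (n : ℕ) : interior (X n ∩ Icc 0 1) = ∅ :=
    interior_inter_Icc_eq_empty ((hcl n).closure_eq ▸ hnd n)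
  have hzero : Icc 0 1 ∩ ⋂ n, (X n)ᶜ ⊆ Icc 0 1 ∩ hFun X ⁻¹' {0} :=
    inter_subset_inter_right _ fun _ hy ↦ hFun_eq_zero_of_forall_notMem (mem_iInter.mp hy)
  have hdense : Icc 0 1 ⊆ closure (Icc 0 1 ∩ hFun X ⁻¹' {0}) :=
    (Icc_subset_closure_inter_iInter_compl zero_ne_one hcl hint).trans (closure_mono hzero)
  simpa only [sub_zero] using osc_eq_sub_of_upperSemicontinuousOn
    ((upperSemicontinuous_hFun hcl).upperSemicontinuousOn _) (fun y _ ↦ hFun_nonneg X y) hdense hx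

/-- for an increasing sequence of closed, nowhere dense subsets of `[0,1]`
(nowhere dense: dense in no nonempty open subinterval of `[0,1]`), the function `h` is
its own oscillation function: `osc_h(x) = h(x)` for every `x ∈ [0,1]`. -/
theorem hFun_eq_own_oscillation (X : ℕ → Set ℝ)
    (hcl : ∀ n, IsClosed (X n)) (hsub : ∀ n, X n ⊆ Set.Icc 0 1)
    (hmono : ∀ n, X n ⊆ X (n + 1))
    (hnd : ∀ n, ∀ a b : ℝ, 0 ≤ a → a < b → b ≤ 1 → ¬ (Set.Ioo a b ⊆ closure (X n))) :
    ∀ x ∈ Set.Icc (0:ℝ) 1, osc (hFun X) x = hFun X x :=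
  hFun_eq_own_oscillation_general X hcl hnd
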